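/- Asymptotic Equipartition Property for single probability spaces via the Kolmogorov distance: for every finite probability space X there exists a sequence (H_n) of uniform (homogeneous) finite probability spaces such that (1/n)·k(X^{⊗n}, H_n) = O(√(ln³n / n)) as n → ∞; consequently ḱ(X, Y) = |Ent(X) − Ent(Y)| for any finite probability spaces X and Y. -/

import Mathlib

open scoped Classical BigOperators
open Finset

noncomputable section

/-- A probability distribution on a finite set. -/
def IsDist {S : Type*} [Fintype S] (p : S → ℝ) : Prop :=
  (∀ x, 0 ≤ p x) ∧ ∑ x, p x = 1

/-- Shannon entropy (natural logarithm). -/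
def ent {S : Type*} [Fintype S] (p : S → ℝ) : ℝ :=
  -∑ x, p x * Real.log (p x)

/-- Relative entropy (Kullback–Leibler divergence). -/
def KL {S : Type*} [Fintype S] (p q : S → ℝ) : ℝ :=
  ∑ x, p x * Real.log (p x / q x)

/-- The n-fold product (Bernoulli) distribution. -/
def powDist {S : Type*} [Fintype S] (p : S → ℝ) (n : ℕ) : (Fin n → S) → ℝ :=
  fun f => ∏ i, p (f i)

/-- Tensor product of two distributions. -/
def prodDist {S T : Type*} [Fintype S] [Fintype T] (p : S → ℝ) (q : T → ℝ) :
    S × T → ℝ :=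
  fun z => p z.1 * q z.2

/-- Empirical distribution of a sequence. -/
def emp {S : Type*} [Fintype S] {n : ℕ} (f : Fin n → S) : S → ℝ :=
  fun a => ((univ.filter (fun i => f i = a)).card : ℝ) / n

/-- A coupling (joint distribution with given marginals). -/
def IsCoupling {S T : Type*} [Fintype S] [Fintype T]
    (w : S × T → ℝ) (p : S → ℝ) (q : T → ℝ) : Prop :=
  IsDist w ∧ (∀ x, ∑ y, w (x, y) = p x) ∧ (∀ y, ∑ x, w (x, y) = q y)

/-- The intrinsic Kolmogorov–Sinai distance. -/
def kdist {S T : Type*} [Fintype S] [Fintype T] (p : S → ℝ) (q : T → ℝ) : ℝ :=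
  sInf {d : ℝ | ∃ w : S × T → ℝ, IsCoupling w p q ∧ d = 2 * ent w - ent p - ent q}

end

/-!
Let `H = ent p` and couple `p` with the uniform distribution on `m` points by subdividing `[0, 1]`
into intervals of lengths `p x` and into `m` equal intervals. A point `x` then meets at most
`p x * m + 2` of the `m` points, so the conditional entropy of the coupling given `x` is at most
`log (p x * m + 2)`. As `log (p x)` deviates from `-H` by at most the square root of the
varentropy `V` on average, this gives `k(p, U_m) ≤ |log m - H| + 2 √V + 4 log 2`.
Entropy and varentropy are additive over products, so for the `n`-fold power and
`m = ⌈exp (n * H)⌉` the right-hand side is `O(√n)`. This is sharper than the estimate obtained from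
type classes.

For the limit, `|ent p - ent q| ≤ k(p, q)` holds for all distributions because marginals have
smaller entropy than couplings. Conversely, the triangle inequality bounds `k` between the powers of
`p` and `q` through the uniform distribution that approximates the power of `p`.
-/

noncomputable section

variable {S T U : Type*} [Fintype S] [Fintype T] [Fintype U]

/-! ### Entropy of couplings -/

lemma ent_eq_sum_negMulLog (p : S → ℝ) : ent p = ∑ x, Real.negMulLog (p x) := by
  simp only [ent, Real.negMulLog, neg_mul, sum_neg_distrib]

lemma ent_comp_equiv (e : T ≃ S) (p : S → ℝ) : ent (p ∘ e) = ent p := by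
  simp only [ent_eq_sum_negMulLog, Function.comp_apply]
  exact e.sum_comp fun x => Real.negMulLog (p x)

lemma IsDist.ent_nonneg {p : S → ℝ} (hp : IsDist p) : 0 ≤ ent p := by
  rw [ent_eq_sum_negMulLog]
  refine sum_nonneg fun x _ => Real.negMulLog_nonneg (hp.1 x) ?_
  exact hp.2 ▸ single_le_sum (fun y _ => hp.1 y) (mem_univ x)

lemma negMulLog_sum_le {w : T → ℝ} (hw : ∀ y, 0 ≤ w y) :
    Real.negMulLog (∑ y, w y) ≤ ∑ y, Real.negMulLog (w y) := by
  simp only [Real.negMulLog_eq_neg, sum_neg_distrib, neg_le_neg_iff, sum_mul]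
  refine sum_le_sum fun y _ => ?_
  rcases (hw y).eq_or_lt with h | h
  · simp [← h]
  · have hle : w y ≤ ∑ y, w y := single_le_sum (fun y _ => hw y) (mem_univ y)
    gcongr

lemma sum_negMulLog_le {w : T → ℝ} (hw : ∀ y, 0 ≤ w y) :
    ∑ y, Real.negMulLog (w y) ≤
      Real.negMulLog (∑ y, w y) + (∑ y, w y) * Real.log #{y | w y ≠ 0} := by
  set s : Finset T := {y | w y ≠ 0}
  have hsum : ∑ y ∈ s, w y = ∑ y, w y := sum_filter_ne_zero univ
  have hent : ∑ y ∈ s, Real.negMulLog (w y) = ∑ y, Real.negMulLog (w y) :=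
    sum_filter_of_ne fun y _ hy h => hy (by rw [h, Real.negMulLog_zero])
  rw [← hsum, ← hent]
  rcases s.eq_empty_or_nonempty with h | h
  · simp [h]
  have hc : (0 : ℝ) < #s := by exact_mod_cast h.card_pos
  have jensen := Real.concaveOn_negMulLog.le_map_sum (t := s) (w := fun _ => (#s : ℝ)⁻¹) (p := w)
    (fun _ _ => by positivity) (by simp [hc.ne']) (fun y _ => hw y)
  simp only [smul_eq_mul, ← mul_sum, Real.negMulLog_mul] at jensen
  rw [inv_mul_le_iff₀ hc] at jensen
  refine jensen.trans_eq ?_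
  rw [Real.negMulLog, Real.log_inv]
  field_simp
  ring

lemma ent_marginal_le {w : S × T → ℝ} (hw : ∀ z, 0 ≤ w z) {p : S → ℝ}
    (h : ∀ x, ∑ y, w (x, y) = p x) : ent p ≤ ent w := by
  rw [ent_eq_sum_negMulLog, ent_eq_sum_negMulLog, Fintype.sum_prod_type]
  refine sum_le_sum fun x _ => ?_
  rw [← h]
  exact negMulLog_sum_le fun y => hw (x, y)

lemma IsCoupling.swap {w : S × T → ℝ} {p : S → ℝ} {q : T → ℝ} (hw : IsCoupling w p q) :
    IsCoupling (w ∘ Equiv.prodComm T S) q p :=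
  ⟨⟨fun _ => hw.1.1 _, ((Equiv.prodComm T S).sum_comp w).trans hw.1.2⟩, hw.2.2, hw.2.1⟩

lemma IsCoupling.isDist_left {w : S × T → ℝ} {p : S → ℝ} {q : T → ℝ} (hw : IsCoupling w p q) :
    IsDist p :=
  ⟨fun x => hw.2.1 x ▸ sum_nonneg fun _ _ => hw.1.1 _,
    by simp only [← hw.2.1, ← Fintype.sum_prod_type', hw.1.2]⟩

lemma IsCoupling.ent_left_le {w : S × T → ℝ} {p : S → ℝ} {q : T → ℝ} (hw : IsCoupling w p q) :
    ent p ≤ ent w :=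
  ent_marginal_le hw.1.1 hw.2.1

lemma IsCoupling.ent_right_le {w : S × T → ℝ} {p : S → ℝ} {q : T → ℝ} (hw : IsCoupling w p q) :
    ent q ≤ ent w :=
  ent_comp_equiv (Equiv.prodComm T S) w ▸ hw.swap.ent_left_le

lemma IsCoupling.ent_le {w : S × T → ℝ} {p : S → ℝ} {q : T → ℝ} (hw : IsCoupling w p q) :
    ent w ≤ ent p + ∑ x, p x * Real.log #{y | w (x, y) ≠ 0} := by
  rw [ent_eq_sum_negMulLog, ent_eq_sum_negMulLog, Fintype.sum_prod_type, ← sum_add_distrib]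
  refine sum_le_sum fun x _ => ?_
  rw [← hw.2.1 x]
  exact sum_negMulLog_le fun y => hw.1.1 (x, y)

/-! ### The Kolmogorov–Sinai distance -/

lemma IsCoupling.of_marginals {w : S × T → ℝ} {p : S → ℝ} {q : T → ℝ} (hp : IsDist p)
    (hw : ∀ z, 0 ≤ w z) (hleft : ∀ x, ∑ y, w (x, y) = p x) (hright : ∀ y, ∑ x, w (x, y) = q y) :
    IsCoupling w p q :=
  ⟨⟨hw, by simp only [Fintype.sum_prod_type, hleft, hp.2]⟩, hleft, hright⟩

lemma isCoupling_prodDist {p : S → ℝ} {q : T → ℝ} (hp : IsDist p) (hq : IsDist q) :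
    IsCoupling (prodDist p q) p q :=
  .of_marginals hp (fun _ => mul_nonneg (hp.1 _) (hq.1 _))
    (fun x => by simp only [prodDist, ← mul_sum, hq.2, mul_one])
    (fun y => by simp only [prodDist, ← sum_mul, hp.2, one_mul])

lemma IsCoupling.abs_ent_sub_le {w : S × T → ℝ} {p : S → ℝ} {q : T → ℝ} (hw : IsCoupling w p q) :
    |ent p - ent q| ≤ 2 * ent w - ent p - ent q := by
  rw [abs_le]
  constructor <;> linarith [hw.ent_left_le, hw.ent_right_le]

lemma IsCoupling.kdist_le {w : S × T → ℝ} {p : S → ℝ} {q : T → ℝ} (hw : IsCoupling w p q) :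
    kdist p q ≤ 2 * ent w - ent p - ent q :=
  csInf_le ⟨|ent p - ent q|, by rintro _ ⟨v, hv, rfl⟩; exact hv.abs_ent_sub_le⟩ ⟨w, hw, rfl⟩

lemma le_kdist {p : S → ℝ} {q : T → ℝ} (hp : IsDist p) (hq : IsDist q) {c : ℝ}
    (h : ∀ w, IsCoupling w p q → c ≤ 2 * ent w - ent p - ent q) : c ≤ kdist p q :=
  le_csInf ⟨_, _, isCoupling_prodDist hp hq, rfl⟩ (by rintro _ ⟨w, hw, rfl⟩; exact h w hw)

lemma abs_ent_sub_le_kdist {p : S → ℝ} {q : T → ℝ} (hp : IsDist p) (hq : IsDist q) :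
    |ent p - ent q| ≤ kdist p q :=
  le_kdist hp hq fun _ hw => hw.abs_ent_sub_le

lemma kdist_comm {p : S → ℝ} {q : T → ℝ} (hp : IsDist p) (hq : IsDist q) :
    kdist p q = kdist q p := by
  refine le_antisymm (le_kdist hq hp fun w hw => ?_) (le_kdist hp hq fun w hw => ?_) <;>
  · have h := hw.swap.kdist_le
    rw [ent_comp_equiv] at h
    linarith

lemma sum_negMulLog_mul_div {a : S → ℝ} {b : T → ℝ} {c : ℝ} (ha : 0 ≤ a) (hb : 0 ≤ b)
    (hasum : ∑ x, a x = c) (hbsum : ∑ y, b y = c) :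
    ∑ x, ∑ y, Real.negMulLog (a x * b y / c) =
      ∑ x, Real.negMulLog (a x) + ∑ y, Real.negMulLog (b y) - Real.negMulLog c := by
  rcases eq_or_ne c 0 with rfl | hc
  · have ha0 := (Fintype.sum_eq_zero_iff_of_nonneg ha).1 hasum
    have hb0 := (Fintype.sum_eq_zero_iff_of_nonneg hb).1 hbsum
    simp [ha0, hb0]
  · simp only [Real.negMulLog_mul, div_eq_mul_inv, sum_add_distrib, ← mul_sum,
      ← sum_mul, hasum, hbsum]
    simp only [Real.negMulLog, Real.log_inv]
    field_simp
    ring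

/-- The gluing of `w₁` and `w₂` along their common marginal `q`, with `S` and `U` conditionally
independent given `T`. Where `q` vanishes, so does the gluing, since `x / 0 = 0`. -/
def glue (w₁ : S × T → ℝ) (w₂ : T × U → ℝ) (q : T → ℝ) : (S × U) × T → ℝ :=
  fun z => w₁ (z.1.1, z.2) * w₂ (z.2, z.1.2) / q z.2

section Gluing

variable {w₁ : S × T → ℝ} {w₂ : T × U → ℝ} {p : S → ℝ} {q : T → ℝ} {r : U → ℝ}

lemma glue_nonneg (h₁ : IsCoupling w₁ p q) (h₂ : IsCoupling w₂ q r) (z : (S × U) × T) :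
    0 ≤ glue w₁ w₂ q z :=
  div_nonneg (mul_nonneg (h₁.1.1 _) (h₂.1.1 _)) (h₁.2.2 z.2 ▸ sum_nonneg fun _ _ => h₁.1.1 _)

lemma ent_glue (h₁ : IsCoupling w₁ p q) (h₂ : IsCoupling w₂ q r) :
    ent (glue w₁ w₂ q) = ent w₁ + ent w₂ - ent q := by
  simp only [ent_eq_sum_negMulLog]
  rw [Fintype.sum_prod_type_right, Fintype.sum_prod_type_right, Fintype.sum_prod_type,
    ← sum_add_distrib, ← sum_sub_distrib]
  refine sum_congr rfl fun y _ => ?_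
  rw [Fintype.sum_prod_type]
  exact sum_negMulLog_mul_div (a := fun x => w₁ (x, y)) (b := fun z => w₂ (y, z))
    (fun x => h₁.1.1 (x, y)) (fun z => h₂.1.1 (y, z)) (h₁.2.2 y) (h₂.2.1 y)

lemma IsCoupling.mul_div_cancel_right (h : IsCoupling w₁ p q) (x : S) (y : T) :
    w₁ (x, y) * q y / q y = w₁ (x, y) := by
  refine mul_div_cancel_of_imp fun hy => ?_
  exact (sum_eq_zero_iff_of_nonneg fun _ _ => h.1.1 _).1 ((h.2.2 y).trans hy) x (mem_univ x)

lemma isCoupling_glue_marginal (h₁ : IsCoupling w₁ p q) (h₂ : IsCoupling w₂ q r) :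
    IsCoupling (fun z => ∑ y, glue w₁ w₂ q (z, y)) p r := by
  have hleft (x : S) : ∑ z, ∑ y, glue w₁ w₂ q ((x, z), y) = p x := by
    rw [sum_comm, ← h₁.2.1 x]
    refine sum_congr rfl fun y _ => ?_
    simp only [glue, ← sum_div, ← mul_sum, h₂.2.1 y]
    exact h₁.mul_div_cancel_right x y
  have hright (z : U) : ∑ x, ∑ y, glue w₁ w₂ q ((x, z), y) = r z := by
    rw [sum_comm, ← h₂.2.2 z]
    refine sum_congr rfl fun y _ => ?_
    simp only [glue, ← sum_div, ← sum_mul, h₁.2.2 y, mul_comm (q y)]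
    exact h₂.swap.mul_div_cancel_right z y
  exact .of_marginals h₁.isDist_left (fun z => sum_nonneg fun y _ => glue_nonneg h₁ h₂ (z, y))
    hleft hright

end Gluing

theorem kdist_triangle {p : S → ℝ} {q : T → ℝ} {r : U → ℝ} (hp : IsDist p) (hq : IsDist q)
    (hr : IsDist r) : kdist p r ≤ kdist p q + kdist q r := by
  rw [← sub_le_iff_le_add]
  refine le_kdist hp hq fun w₁ hw₁ => ?_
  rw [sub_le_comm]
  refine le_kdist hq hr fun w₂ hw₂ => ?_
  have hdist := (isCoupling_glue_marginal hw₁ hw₂).kdist_le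
  have hmarginal := ent_marginal_le (glue_nonneg hw₁ hw₂) fun _ => rfl
  rw [ent_glue hw₁ hw₂] at hmarginal
  linarith

/-! ### The comonotone coupling -/

/-- The length of `[a, b] ∩ [c, d]` when `a ≤ b` and `c ≤ d`, as a second difference of `min`, so
that sums over adjacent intervals telescope. -/
def overlap (a b c d : ℝ) : ℝ := (min b d - min a d) - (min b c - min a c)

lemma overlap_comm (a b c d : ℝ) : overlap a b c d = overlap c d a b := by
  simp only [overlap, min_comm a, min_comm b]
  ring

lemma overlap_nonneg {a b c d : ℝ} (hab : a ≤ b) (hcd : c ≤ d) : 0 ≤ overlap a b c d := by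
  unfold overlap
  grind

lemma overlap_eq_sub {a b c d : ℝ} (hca : c ≤ a) (hab : a ≤ b) (hbd : b ≤ d) :
    overlap a b c d = b - a := by
  simp only [overlap, min_eq_left hbd, min_eq_left (hab.trans hbd), min_eq_right hca,
    min_eq_right (hca.trans hab), sub_self, sub_zero]

lemma lt_and_lt_of_overlap_ne_zero {a b c d : ℝ} (hab : a ≤ b) (hcd : c ≤ d)
    (h : overlap a b c d ≠ 0) : a < d ∧ c < b := by
  unfold overlap at h
  grind

lemma sum_range_overlap (a b : ℝ) (G : ℕ → ℝ) (m : ℕ) :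
    ∑ j ∈ range m, overlap a b (G j) (G (j + 1)) = overlap a b (G 0) (G m) :=
  sum_range_sub (fun j => min b (G j) - min a (G j)) m

/-- The position of `x` in a fixed enumeration of `S`. -/
def index (x : S) : ℕ := Fintype.equivFin S x

lemma index_injective : Function.Injective (index : S → ℕ) :=
  Fin.val_injective.comp (Fintype.equivFin S).injective

lemma index_lt_card (x : S) : index x < Fintype.card S := (Fintype.equivFin S x).isLt

lemma exists_index_eq {i : ℕ} (hi : i < Fintype.card S) : ∃ x : S, index x = i :=
  ⟨(Fintype.equivFin S).symm ⟨i, hi⟩, by simp [index]⟩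

lemma sum_index (G : ℕ → ℝ) : ∑ x : S, G (index x) = ∑ i ∈ range (Fintype.card S), G i := by
  rw [← Fin.sum_univ_eq_sum_range]
  exact (Fintype.equivFin S).sum_comp fun i => G i

/-- The cumulative distribution function of `p` along the enumeration `index`: the mass of the
first `i` points. -/
def cumulative (p : S → ℝ) (i : ℕ) : ℝ := ∑ x with index x < i, p x

lemma cumulative_zero (p : S → ℝ) : cumulative p 0 = 0 := by
  simp [cumulative]

lemma cumulative_card (p : S → ℝ) : cumulative p (Fintype.card S) = ∑ x, p x := by
  simp [cumulative, index_lt_card]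

lemma cumulative_index_succ (p : S → ℝ) (x : S) :
    cumulative p (index x + 1) = cumulative p (index x) + p x := by
  have hsplit : univ.filter (fun y : S => index y < index x + 1) =
      insert x (univ.filter fun y => index y < index x) := by
    ext y
    simp [Order.lt_add_one_iff, le_iff_lt_or_eq, index_injective.eq_iff, or_comm]
  rw [cumulative, hsplit, sum_insert (by simp), add_comm, cumulative]

lemma IsDist.cumulative_mono {p : S → ℝ} (hp : IsDist p) : Monotone (cumulative p) :=
  fun _ _ hij => sum_le_sum_of_subset_of_nonneg
    (monotone_filter_right _ fun _ _ h => h.trans_le hij) fun x _ _ => hp.1 x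

/-- The comonotone (quantile) coupling: subdivide `[0, 1]` into intervals of lengths `p x` and into
intervals of lengths `q y`, and give `(x, y)` the length of the intersection of its intervals. -/
def comonotone (p : S → ℝ) (q : T → ℝ) : S × T → ℝ := fun z =>
  overlap (cumulative p (index z.1)) (cumulative p (index z.1 + 1))
    (cumulative q (index z.2)) (cumulative q (index z.2 + 1))

lemma sum_comonotone {p : S → ℝ} {q : T → ℝ} (hp : IsDist p) (hq : IsDist q) (x : S) :
    ∑ y, comonotone p q (x, y) = p x := by
  have hmono := hp.cumulative_mono
  have h0 : 0 ≤ cumulative p (index x) := cumulative_zero p ▸ hmono (Nat.zero_le _)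
  have h1 : cumulative p (index x + 1) ≤ 1 :=
    (hmono (index_lt_card x)).trans_eq ((cumulative_card p).trans hp.2)
  simp only [comonotone]
  rw [sum_index fun j => overlap _ _ (cumulative q j) (cumulative q (j + 1)), sum_range_overlap,
    cumulative_zero, cumulative_card, hq.2, overlap_eq_sub h0 (hmono (Nat.le_succ _)) h1,
    cumulative_index_succ, add_sub_cancel_left]

lemma isCoupling_comonotone {p : S → ℝ} {q : T → ℝ} (hp : IsDist p) (hq : IsDist q) :
    IsCoupling (comonotone p q) p q := by
  refine .of_marginals hp (fun z => ?_) (sum_comonotone hp hq) fun y => ?_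
  · exact overlap_nonneg (hp.cumulative_mono (Nat.le_succ _)) (hq.cumulative_mono (Nat.le_succ _))
  · rw [← sum_comonotone hq hp y]
    exact sum_congr rfl fun x _ => overlap_comm _ _ _ _

/-! ### Coupling with a uniform distribution -/

/-- The uniform distribution on `T`, the model of a homogeneous probability space. -/
def unifDist (T : Type*) [Fintype T] : T → ℝ := fun _ => 1 / Fintype.card T

lemma unifDist_fin (m : ℕ) : unifDist (Fin m) = fun _ => 1 / (m : ℝ) :=
  funext fun _ => by rw [unifDist, Fintype.card_fin]

lemma isDist_unifDist [Nonempty T] : IsDist (unifDist T) :=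
  ⟨fun _ => by unfold unifDist; positivity, by simp [unifDist]⟩

lemma ent_unifDist [Nonempty T] : ent (unifDist T) = Real.log (Fintype.card T) := by
  simp [ent, unifDist]

lemma cumulative_unifDist {i : ℕ} (hi : i ≤ Fintype.card T) :
    cumulative (unifDist T) i = i / Fintype.card T := by
  induction i with
  | zero => simp [cumulative_zero]
  | succ i ih =>
    obtain ⟨y, rfl⟩ := exists_index_eq (S := T) hi
    rw [cumulative_index_succ, ih (index_lt_card y).le, unifDist]
    push_cast
    ring

lemma card_Ico_floor_ceil_le {a b : ℝ} (ha : 0 ≤ a) (hab : a ≤ b) :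
    (#(Ico ⌊a⌋₊ ⌈b⌉₊) : ℝ) ≤ b - a + 2 := by
  have hfc : ⌊a⌋₊ ≤ ⌈b⌉₊ := (Nat.floor_mono hab).trans (Nat.floor_le_ceil b)
  rw [Nat.card_Ico, Nat.cast_sub hfc]
  linarith [Nat.ceil_lt_add_one (ha.trans hab), Nat.lt_floor_add_one a]

lemma card_comonotone_unifDist_ne_zero_le [Nonempty T] {p : S → ℝ} (hp : IsDist p) (x : S) :
    (#{y | comonotone p (unifDist T) (x, y) ≠ 0} : ℝ) ≤ p x * Fintype.card T + 2 := by
  set m : ℝ := (Fintype.card T : ℝ)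
  have hm : 0 < m := by simp [m, Fintype.card_pos]
  set a := cumulative p (index x)
  set b := cumulative p (index x + 1)
  have ha : 0 ≤ a := cumulative_zero p ▸ hp.cumulative_mono (Nat.zero_le _)
  have hab : a ≤ b := hp.cumulative_mono (Nat.le_succ _)
  set fiber : Finset T := {y | comonotone p (unifDist T) (x, y) ≠ 0}
  have hmaps : Set.MapsTo (index : T → ℕ) fiber (Ico ⌊a * m⌋₊ ⌈b * m⌉₊) := by
    intro y hy
    obtain ⟨hlt, hgt⟩ := lt_and_lt_of_overlap_ne_zero hab
      (isDist_unifDist.cumulative_mono (Nat.le_succ _)) (mem_filter.1 hy).2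
    rw [cumulative_unifDist (index_lt_card y), lt_div_iff₀ hm] at hlt
    rw [cumulative_unifDist (index_lt_card y).le, div_lt_iff₀ hm] at hgt
    exact mem_Ico.2 ⟨Nat.lt_succ_iff.1 ((Nat.floor_lt (by positivity)).2 hlt), Nat.lt_ceil.2 hgt⟩
  calc (#fiber : ℝ)
      ≤ #(Ico ⌊a * m⌋₊ ⌈b * m⌉₊) := by
        exact_mod_cast card_le_card_of_injOn index hmaps index_injective.injOn
    _ ≤ b * m - a * m + 2 := card_Ico_floor_ceil_le (by positivity) (by gcongr)
    _ = p x * m + 2 := by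
        rw [← sub_mul, sub_eq_of_eq_add' (cumulative_index_succ p x)]

/-- The varentropy: the variance of the information content `-log (p x)`. -/
def varentropy (p : S → ℝ) : ℝ := ∑ x, p x * (Real.log (p x) + ent p) ^ 2

lemma sum_mul_abs_log_add_ent_le {p : S → ℝ} (hp : IsDist p) :
    ∑ x, p x * |Real.log (p x) + ent p| ≤ √(varentropy p) := by
  refine Real.le_sqrt_of_sq_le ?_
  have cauchy := sum_sq_le_sum_mul_sum_of_sq_le_mul univ
    (r := fun x => p x * |Real.log (p x) + ent p|)
    (fun x _ => hp.1 x) (fun x _ => mul_nonneg (hp.1 x) (sq_nonneg (Real.log (p x) + ent p)))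
    (fun x _ => by rw [mul_pow, sq_abs, sq, mul_assoc])
  rwa [hp.2, one_mul] at cauchy

lemma posLog_mul_add_two_le {a m : ℝ} (ha : 0 < a) (hm : 0 < m) (H : ℝ) :
    Real.posLog (a * m + 2) ≤
      2 * Real.log 2 + |Real.log a + H| + (Real.log m - H)⁺ := by
  have hadd : Real.posLog (a * m + 2) ≤ 2 * Real.log 2 + Real.posLog (a * m) := by
    have h := Real.posLog_add (x := a * m) (y := 2)
    rw [Real.posLog_eq_log (x := 2) (by norm_num)] at h
    linarith
  have hmul : Real.posLog (a * m) ≤ |Real.log a + H| + (Real.log m - H)⁺ := by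
    rw [Real.posLog_apply, Real.log_mul ha.ne' hm.ne']
    refine max_le (by positivity) ?_
    linarith [le_abs_self (Real.log a + H), le_posPart (Real.log m - H)]
  linarith

lemma IsDist.sum_mul_log_le {p : S → ℝ} (hp : IsDist p) {m : ℝ} (hm : 0 < m) {N : S → ℕ}
    (hN : ∀ x, N x ≤ p x * m + 2) :
    ∑ x, p x * Real.log (N x) ≤ 2 * Real.log 2 + √(varentropy p) + (Real.log m - ent p)⁺ := by
  have hterm (x : S) : p x * Real.log (N x) ≤ p x * (2 * Real.log 2) +
      p x * |Real.log (p x) + ent p| + p x * (Real.log m - ent p)⁺ := by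
    rw [← mul_add, ← mul_add]
    rcases (hp.1 x).eq_or_lt with h0 | hpos
    · simp [← h0]
    · rw [← Real.log_of_nat_eq_posLog]
      gcongr
      exact (Real.posLog_le_posLog (Nat.cast_nonneg _) (hN x)).trans
        (posLog_mul_add_two_le hpos hm _)
  refine (sum_le_sum fun x _ => hterm x).trans ?_
  simp only [sum_add_distrib, ← sum_mul, hp.2, one_mul]
  linarith [sum_mul_abs_log_add_ent_le hp]

theorem kdist_unifDist_le [Nonempty T] {p : S → ℝ} (hp : IsDist p) :
    kdist p (unifDist T) ≤
      |Real.log (Fintype.card T) - ent p| + 2 * √(varentropy p) + 4 * Real.log 2 := by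
  set L := Real.log (Fintype.card T)
  have hw := isCoupling_comonotone hp (isDist_unifDist (T := T))
  have hdist := hw.kdist_le
  have hent := hw.ent_le
  have hcond := hp.sum_mul_log_le (m := Fintype.card T) (by simp [Fintype.card_pos])
    (card_comonotone_unifDist_ne_zero_le (T := T) hp)
  have hpos : |L - ent p| + (L - ent p) = 2 * (L - ent p)⁺ := by
    rw [abs_add_eq_two_nsmul_posPart, nsmul_eq_mul, Nat.cast_ofNat]
  rw [ent_unifDist] at hdist
  linarith

/-! ### Powers -/

lemma ent_prodDist {p : S → ℝ} {q : T → ℝ} (hp : IsDist p) (hq : IsDist q) :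
    ent (prodDist p q) = ent p + ent q := by
  simp only [ent_eq_sum_negMulLog, Fintype.sum_prod_type, prodDist, Real.negMulLog_mul,
    sum_add_distrib, ← sum_mul, ← mul_sum, hp.2, hq.2, one_mul]

lemma sum_mul_log_add_ent {p : S → ℝ} (hp : IsDist p) :
    ∑ x, p x * (Real.log (p x) + ent p) = 0 := by
  simp only [mul_add, sum_add_distrib, ← sum_mul, hp.2, one_mul, ent, add_neg_cancel]

lemma varentropy_prodDist {p : S → ℝ} {q : T → ℝ} (hp : IsDist p) (hq : IsDist q) :
    varentropy (prodDist p q) = varentropy p + varentropy q := by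
  set a : S → ℝ := fun x => Real.log (p x) + ent p
  set b : T → ℝ := fun y => Real.log (q y) + ent q
  have hterm (x : S) (y : T) :
      p x * q y * (Real.log (p x * q y) + ent (prodDist p q)) ^ 2 =
        p x * a x ^ 2 * q y + 2 * (p x * a x) * (q y * b y) + p x * (q y * b y ^ 2) := by
    rcases eq_or_ne (p x) 0 with hx | hx
    · simp [hx]
    rcases eq_or_ne (q y) 0 with hy | hy
    · simp [hy]
    rw [Real.log_mul hx hy, ent_prodDist hp hq]
    ring
  have hb : ∑ y, q y * b y = 0 := sum_mul_log_add_ent hq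
  rw [varentropy, Fintype.sum_prod_type]
  simp only [prodDist] at hterm ⊢
  simp only [hterm, sum_add_distrib, ← mul_sum, ← sum_mul, hp.2, hq.2, hb, mul_zero,
    mul_one, one_mul, add_zero]
  rfl

lemma varentropy_comp_equiv (e : T ≃ S) (p : S → ℝ) : varentropy (p ∘ e) = varentropy p := by
  simp only [varentropy, ent_comp_equiv, Function.comp_apply]
  exact e.sum_comp fun x => p x * (Real.log (p x) + ent p) ^ 2

lemma powDist_succ (p : S → ℝ) (n : ℕ) :
    powDist p (n + 1) = prodDist p (powDist p n) ∘ (Fin.consEquiv fun _ => S).symm := by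
  ext f
  simp [powDist, prodDist, Fin.prod_univ_succ, Fin.consEquiv, Fin.tail]

lemma isDist_powDist {p : S → ℝ} (hp : IsDist p) (n : ℕ) : IsDist (powDist p n) := by
  refine ⟨fun f => prod_nonneg fun i _ => hp.1 _, ?_⟩
  simp only [powDist]
  rw [← Fintype.sum_pow, hp.2, one_pow]

lemma ent_powDist {p : S → ℝ} (hp : IsDist p) (n : ℕ) : ent (powDist p n) = n * ent p := by
  induction n with
  | zero => simp [ent, powDist]
  | succ n ih =>
    rw [powDist_succ, ent_comp_equiv, ent_prodDist hp (isDist_powDist hp n), ih]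
    push_cast
    ring

lemma varentropy_powDist {p : S → ℝ} (hp : IsDist p) (n : ℕ) :
    varentropy (powDist p n) = n * varentropy p := by
  induction n with
  | zero => simp [varentropy, ent, powDist]
  | succ n ih =>
    rw [powDist_succ, varentropy_comp_equiv, varentropy_prodDist hp (isDist_powDist hp n), ih]
    push_cast
    ring

lemma kdist_powDist_unifDist_le [Nonempty T] {p : S → ℝ} (hp : IsDist p) (n : ℕ) :
    kdist (powDist p n) (unifDist T) ≤ |Real.log (Fintype.card T) - n * ent p| +
      2 * √(varentropy p) * √n + 4 * Real.log 2 := by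
  have h := kdist_unifDist_le (T := T) (isDist_powDist hp n)
  rwa [ent_powDist hp, varentropy_powDist hp, Real.sqrt_mul (Nat.cast_nonneg n),
    mul_comm √(n : ℝ), ← mul_assoc] at h

lemma mul_abs_ent_sub_le_kdist_powDist {p : S → ℝ} {q : T → ℝ} (hp : IsDist p) (hq : IsDist q)
    (n : ℕ) : n * |ent p - ent q| ≤ kdist (powDist p n) (powDist q n) := by
  have h := abs_ent_sub_le_kdist (isDist_powDist hp n) (isDist_powDist hq n)
  rwa [ent_powDist hp, ent_powDist hq, ← mul_sub, abs_mul, Nat.abs_cast] at h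

/-! ### Asymptotics -/

lemma abs_log_natCeil_exp_sub_le {t : ℝ} (ht : 0 ≤ t) :
    |Real.log ⌈Real.exp t⌉₊ - t| ≤ Real.log 2 := by
  have hlower : t ≤ Real.log ⌈Real.exp t⌉₊ := by
    simpa using Real.log_le_log (Real.exp_pos t) (Nat.le_ceil (Real.exp t))
  have hceil : (⌈Real.exp t⌉₊ : ℝ) ≤ 2 * Real.exp t := by
    linarith [Nat.ceil_lt_add_one (Real.exp_pos t).le, Real.one_le_exp ht]
  have hupper : Real.log ⌈Real.exp t⌉₊ ≤ Real.log 2 + t := by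
    have h := Real.log_le_log (by simp [Real.exp_pos]) hceil
    rwa [Real.log_mul two_ne_zero (Real.exp_ne_zero t), Real.log_exp] at h
  rw [abs_of_nonneg (sub_nonneg.2 hlower)]
  linarith

/-- The cardinality `⌈exp (n * ent p)⌉` of the uniform space that approximates `powDist p n`. -/
def aepCard (p : S → ℝ) (n : ℕ) : ℕ := ⌈Real.exp (n * ent p)⌉₊

instance neZero_aepCard (p : S → ℝ) (n : ℕ) : NeZero (aepCard p n) :=
  ⟨(Nat.ceil_pos.2 (Real.exp_pos _)).ne'⟩

lemma abs_log_aepCard_sub_le {p : S → ℝ} (hp : IsDist p) (n : ℕ) :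
    |Real.log (aepCard p n) - n * ent p| ≤ Real.log 2 :=
  abs_log_natCeil_exp_sub_le (mul_nonneg n.cast_nonneg hp.ent_nonneg)

theorem kdist_powDist_unifDist_aepCard_le {p : S → ℝ} (hp : IsDist p) (n : ℕ) :
    kdist (powDist p n) (unifDist (Fin (aepCard p n))) ≤
      2 * √(varentropy p) * √n + 5 * Real.log 2 := by
  have h := kdist_powDist_unifDist_le (T := Fin (aepCard p n)) hp n
  rw [Fintype.card_fin] at h
  linarith [abs_log_aepCard_sub_le hp n]

theorem kdist_powDist_powDist_le {p : S → ℝ} {q : T → ℝ} (hp : IsDist p) (hq : IsDist q) (n : ℕ) :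
    kdist (powDist p n) (powDist q n) ≤ n * |ent p - ent q| +
      (2 * (√(varentropy p) + √(varentropy q)) * √n + 10 * Real.log 2) := by
  have hu := isDist_unifDist (T := Fin (aepCard p n))
  have htri := kdist_triangle (isDist_powDist hp n) hu (isDist_powDist hq n)
  rw [kdist_comm hu (isDist_powDist hq n)] at htri
  have hpu := kdist_powDist_unifDist_aepCard_le hp n
  have hqu := kdist_powDist_unifDist_le (T := Fin (aepCard p n)) hq n
  rw [Fintype.card_fin] at hqu
  have hlog : |Real.log (aepCard p n) - n * ent q| ≤ Real.log 2 + n * |ent p - ent q| := by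
    rw [← Nat.abs_cast n, ← abs_mul, mul_sub, Nat.abs_cast]
    exact (abs_sub_le _ (n * ent p) _).trans (by gcongr; exact abs_log_aepCard_sub_le hp n)
  linarith

lemma inv_sqrt_le_sqrt_log_pow_div {n : ℕ} (hn : 3 ≤ n) :
    1 / √(n : ℝ) ≤ √(Real.log n ^ 3 / n) := by
  have hn3 : (3 : ℝ) ≤ n := by exact_mod_cast hn
  have hlog : 1 ≤ Real.log n := by
    rw [Real.le_log_iff_exp_le (by linarith)]
    linarith [Real.exp_one_lt_d9]
  rw [← Real.sqrt_one, ← Real.sqrt_div zero_le_one]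
  gcongr
  exact one_le_pow₀ hlog

lemma tendsto_mul_sqrt_add_div_atTop (A B : ℝ) :
    Filter.Tendsto (fun n : ℕ => (A * √n + B) / n) Filter.atTop (nhds 0) := by
  have hsqrt := (tendsto_inv_atTop_zero.comp
    (Real.tendsto_sqrt_atTop.comp (tendsto_natCast_atTop_atTop (R := ℝ)))).const_mul A
  have hlim := hsqrt.add (tendsto_const_div_atTop_nhds_zero_nat B)
  simp only [mul_zero, add_zero] at hlim
  refine hlim.congr fun n => ?_
  rw [add_div, mul_div_assoc, Real.sqrt_div_self', one_div]
  rfl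

theorem tendsto_kdist_powDist_div {p : S → ℝ} {q : T → ℝ} (hp : IsDist p) (hq : IsDist q) :
    Filter.Tendsto (fun n : ℕ => kdist (powDist p n) (powDist q n) / n)
      Filter.atTop (nhds |ent p - ent q|) := by
  have hlim := (tendsto_mul_sqrt_add_div_atTop (2 * (√(varentropy p) + √(varentropy q)))
    (10 * Real.log 2)).const_add |ent p - ent q|
  rw [add_zero] at hlim
  refine tendsto_of_tendsto_of_tendsto_of_le_of_le' tendsto_const_nhds hlim ?_ ?_ <;>
    filter_upwards [Filter.eventually_gt_atTop 0] with n hn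
  · rw [le_div_iff₀ (by exact_mod_cast hn), mul_comm]
    exact mul_abs_ent_sub_le_kdist_powDist hp hq n
  · rw [div_le_iff₀ (by exact_mod_cast hn), add_mul, div_mul_cancel₀ _ (by positivity), mul_comm]
    exact kdist_powDist_powDist_le hp hq n

lemma kdist_powDist_unifDist_aepCard_div_le {p : S → ℝ} (hp : IsDist p) {n : ℕ} (hn : 0 < n) :
    kdist (powDist p n) (unifDist (Fin (aepCard p n))) / n ≤
      (2 * √(varentropy p) + 5 * Real.log 2) * (1 / √n) := by
  have hn1 : 1 ≤ √(n : ℝ) := Real.one_le_sqrt.2 (by exact_mod_cast hn)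
  have hlog2 : 0 ≤ Real.log 2 := Real.log_nonneg one_le_two
  rw [← Real.sqrt_div_self', mul_div_assoc']
  gcongr
  nlinarith [kdist_powDist_unifDist_aepCard_le hp n]

end

theorem stmt19_general {S : Type*} [Fintype S] (p : S → ℝ) (hp : IsDist p) :
    (∃ m : ℕ → ℕ, (∀ n, 0 < m n) ∧ ∃ C : ℝ, 0 ≤ C ∧ ∀ n : ℕ, 0 < n →
      kdist (powDist p n) (fun _ : Fin (m n) => (1 : ℝ) / (m n)) / n ≤ C * (1 / √n)) ∧
    ∀ (T : Type*) [Fintype T] (q : T → ℝ), IsDist q →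
      Filter.Tendsto (fun n : ℕ => kdist (powDist p n) (powDist q n) / n)
        Filter.atTop (nhds |ent p - ent q|) := by
  refine ⟨⟨aepCard p, fun n => NeZero.pos _, 2 * √(varentropy p) + 5 * Real.log 2,
    by positivity, fun n hn => ?_⟩, fun _ _ _ hq => tendsto_kdist_powDist_div hp hq⟩
  have h := kdist_powDist_unifDist_aepCard_div_le hp hn
  rwa [unifDist_fin] at h

theorem stmt19 {S : Type*} [Fintype S] (p : S → ℝ) (hp : IsDist p) :
    (∃ m : ℕ → ℕ, (∀ n, 0 < m n) ∧
      ∃ C : ℝ, ∃ N : ℕ, ∀ n : ℕ, N ≤ n →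
        kdist (powDist p n) (fun _ : Fin (m n) => (1 : ℝ) / (m n)) / n
          ≤ C * Real.sqrt ((Real.log n) ^ 3 / n)) ∧
    ∀ (T : Type) [Fintype T] (q : T → ℝ), IsDist q →
      Filter.Tendsto (fun n : ℕ => kdist (powDist p n) (powDist q n) / n)
        Filter.atTop (nhds |ent p - ent q|) := by
  obtain ⟨⟨m, hm, C, hC, hrate⟩, hlim⟩ := stmt19_general p hp
  exact ⟨⟨m, hm, C, 3, fun n hn => (hrate n (by omega)).trans
    (mul_le_mul_of_nonneg_left (inv_sqrt_le_sqrt_log_pow_div hn) hC)⟩, hlim⟩
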